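/- Soundness of the While-∀*∃* rule: let b be a predicate on program states expressible as a syntactic Boolean state expression, C a command, I a hyper-assertion, and Q a closed syntactic hyper-assertion in which no universal state quantifier ∀⟨_⟩ occurs within the scope of any existential quantifier (over states or over values); let [Q] denote the hyper-assertion λS. (S satisfies Q). Define if(b){C} := ((assume b) ; C) + (assume(λσ. ¬ b(σ))) and while(b){C} := ((assume b) ; C)* ; assume(λσ. ¬ b(σ)). If the hyper-triples ⊨ {I} if(b){C} {I} and ⊨ {I} assume(λσ. ¬ b(σ)) {[Q]} are valid, then the hyper-triple ⊨ {I} while(b){C} {[Q]} is valid. -/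

import Mathlib

/-- Commands of the programming language. -/
inductive Cmd (PVar PVal : Type) : Type where
  | skip : Cmd PVar PVal
  | assign : PVar → ((PVar → PVal) → PVal) → Cmd PVar PVal
  | havoc : PVar → Cmd PVar PVal
  | assume : ((PVar → PVal) → Prop) → Cmd PVar PVal
  | seq : Cmd PVar PVal → Cmd PVar PVal → Cmd PVar PVal
  | choice : Cmd PVar PVal → Cmd PVar PVal → Cmd PVar PVal
  | iter : Cmd PVar PVal → Cmd PVar PVal

/-- Big-step semantics ⟨C, σ⟩ → σ'. -/
inductive BigStep {PVar PVal : Type} [DecidableEq PVar] :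
    Cmd PVar PVal → (PVar → PVal) → (PVar → PVal) → Prop where
  | skip (σ : PVar → PVal) : BigStep Cmd.skip σ σ
  | assign (x : PVar) (e : (PVar → PVal) → PVal) (σ : PVar → PVal) :
      BigStep (Cmd.assign x e) σ (Function.update σ x (e σ))
  | havoc (x : PVar) (σ : PVar → PVal) (v : PVal) :
      BigStep (Cmd.havoc x) σ (Function.update σ x v)
  | assume {b : (PVar → PVal) → Prop} {σ : PVar → PVal} (h : b σ) :
      BigStep (Cmd.assume b) σ σ
  | seq {C1 C2 : Cmd PVar PVal} {σ σ' σ'' : PVar → PVal} :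
      BigStep C1 σ σ' → BigStep C2 σ' σ'' → BigStep (Cmd.seq C1 C2) σ σ''
  | choiceL {C1 C2 : Cmd PVar PVal} {σ σ' : PVar → PVal} :
      BigStep C1 σ σ' → BigStep (Cmd.choice C1 C2) σ σ'
  | choiceR {C1 C2 : Cmd PVar PVal} {σ σ' : PVar → PVal} :
      BigStep C2 σ σ' → BigStep (Cmd.choice C1 C2) σ σ'
  | iterNil {C : Cmd PVar PVal} {σ : PVar → PVal} : BigStep (Cmd.iter C) σ σ
  | iterCons {C : Cmd PVar PVal} {σ σ' σ'' : PVar → PVal} :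
      BigStep C σ σ' → BigStep (Cmd.iter C) σ' σ'' → BigStep (Cmd.iter C) σ σ''

/-- Extended states: a logical state paired with a program state. -/
abbrev EState (PVar PVal LVar LVal : Type) : Type :=
  (LVar → LVal) × (PVar → PVal)

/-- Extended semantics of a command on a set of extended states. -/
def sem {PVar PVal LVar LVal : Type} [DecidableEq PVar] (C : Cmd PVar PVal)
    (S : Set (EState PVar PVal LVar LVal)) : Set (EState PVar PVal LVar LVal) :=
  { φ | ∃ σ : PVar → PVal, (φ.1, σ) ∈ S ∧ BigStep C σ φ.2 }

/-- Hyper-assertions: predicates over sets of extended states. -/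
abbrev HAssn (PVar PVal LVar LVal : Type) : Type :=
  Set (EState PVar PVal LVar LVal) → Prop

/-- Validity of a hyper-triple ⊨ {P} C {Q}. -/
def HyperTriple {PVar PVal LVar LVal : Type} [DecidableEq PVar]
    (P : HAssn PVar PVal LVar LVal) (C : Cmd PVar PVal)
    (Q : HAssn PVar PVal LVar LVal) : Prop :=
  ∀ S : Set (EState PVar PVal LVar LVal), P S → Q (sem C S)

/-- Syntactic program expressions (constants, program-variable lookups, binary
operations, unary function applications). Program and logical values are drawn
from a single type `Val`. -/
inductive PExp (PVar Val : Type) : Type where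
  | const : Val → PExp PVar Val
  | var : PVar → PExp PVar Val
  | binop : (Val → Val → Val) → PExp PVar Val → PExp PVar Val → PExp PVar Val
  | fn : (Val → Val) → PExp PVar Val → PExp PVar Val

/-- Semantic interpretation ⟦e⟧ of a syntactic program expression. -/
def PExp.eval {PVar Val : Type} (σ : PVar → Val) : PExp PVar Val → Val
  | .const v => v
  | .var x => σ x
  | .binop op e1 e2 => op (PExp.eval σ e1) (PExp.eval σ e2)
  | .fn f e => f (PExp.eval σ e)

/-- Syntactic hyper-expressions: constants, program-variable lookups φ^P(x) and
logical-variable lookups φ^L(x) (state variables are names in ℕ), binary operations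
and unary function applications. Bound values are represented as constants. -/
inductive HExp (PVar LVar Val : Type) : Type where
  | const : Val → HExp PVar LVar Val
  | pvar : ℕ → PVar → HExp PVar LVar Val
  | lvar : ℕ → LVar → HExp PVar LVar Val
  | binop : (Val → Val → Val) → HExp PVar LVar Val → HExp PVar LVar Val → HExp PVar LVar Val
  | fn : (Val → Val) → HExp PVar LVar Val → HExp PVar LVar Val

/-- Evaluation of a hyper-expression under an environment for state variables. -/
def HExp.eval {PVar LVar Val : Type} (env : ℕ → EState PVar Val LVar Val) :
    HExp PVar LVar Val → Val
  | .const v => v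
  | .pvar n x => (env n).2 x
  | .lvar n x => (env n).1 x
  | .binop op e1 e2 => op (HExp.eval env e1) (HExp.eval env e2)
  | .fn f e => f (HExp.eval env e)

/-- Syntactic hyper-assertions: Boolean constants, comparisons of hyper-expressions,
conjunction, disjunction, value quantifiers (binding represented by Lean functions)
and state quantifiers (binding state-variable names in ℕ). -/
inductive HAssrt (PVar LVar Val : Type) : Type where
  | bconst : Prop → HAssrt PVar LVar Val
  | comp : (Val → Val → Prop) → HExp PVar LVar Val → HExp PVar LVar Val → HAssrt PVar LVar Val
  | conj : HAssrt PVar LVar Val → HAssrt PVar LVar Val → HAssrt PVar LVar Val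
  | disj : HAssrt PVar LVar Val → HAssrt PVar LVar Val → HAssrt PVar LVar Val
  | forallV : (Val → HAssrt PVar LVar Val) → HAssrt PVar LVar Val
  | existsV : (Val → HAssrt PVar LVar Val) → HAssrt PVar LVar Val
  | forallS : ℕ → HAssrt PVar LVar Val → HAssrt PVar LVar Val
  | existsS : ℕ → HAssrt PVar LVar Val → HAssrt PVar LVar Val

/-- Satisfaction of a syntactic hyper-assertion by a set S of extended states,
relative to an environment for state variables. State quantifiers range over S. -/
def HAssrt.sat {PVar LVar Val : Type} (S : Set (EState PVar Val LVar Val))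
    (env : ℕ → EState PVar Val LVar Val) : HAssrt PVar LVar Val → Prop
  | .bconst b => b
  | .comp r e1 e2 => r (HExp.eval env e1) (HExp.eval env e2)
  | .conj A B => HAssrt.sat S env A ∧ HAssrt.sat S env B
  | .disj A B => HAssrt.sat S env A ∨ HAssrt.sat S env B
  | .forallV body => ∀ v : Val, HAssrt.sat S env (body v)
  | .existsV body => ∃ v : Val, HAssrt.sat S env (body v)
  | .forallS n A => ∀ α ∈ S, HAssrt.sat S (Function.update env n α) A
  | .existsS n A => ∃ α ∈ S, HAssrt.sat S (Function.update env n α) A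

/-- Free state variables of a hyper-expression. -/
def HExp.fsv {PVar LVar Val : Type} : HExp PVar LVar Val → Set ℕ
  | .const _ => ∅
  | .pvar n _ => {n}
  | .lvar n _ => {n}
  | .binop _ e1 e2 => HExp.fsv e1 ∪ HExp.fsv e2
  | .fn _ e => HExp.fsv e

/-- Free state variables of a syntactic hyper-assertion. -/
def HAssrt.fsv {PVar LVar Val : Type} : HAssrt PVar LVar Val → Set ℕ
  | .bconst _ => ∅
  | .comp _ e1 e2 => HExp.fsv e1 ∪ HExp.fsv e2
  | .conj A B => HAssrt.fsv A ∪ HAssrt.fsv B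
  | .disj A B => HAssrt.fsv A ∪ HAssrt.fsv B
  | .forallV body => ⋃ v, HAssrt.fsv (body v)
  | .existsV body => ⋃ v, HAssrt.fsv (body v)
  | .forallS n A => HAssrt.fsv A \ {n}
  | .existsS n A => HAssrt.fsv A \ {n}

/-- A syntactic hyper-assertion is closed iff it has no free state variables. -/
def HAssrt.Closed {PVar LVar Val : Type} (A : HAssrt PVar LVar Val) : Prop :=
  HAssrt.fsv A = ∅

/-- Syntactic Boolean state expressions: comparisons of syntactic program expressions
and Boolean connectives. -/
inductive PBExp (PVar Val : Type) : Type where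
  | comp : (Val → Val → Prop) → PExp PVar Val → PExp PVar Val → PBExp PVar Val
  | and : PBExp PVar Val → PBExp PVar Val → PBExp PVar Val
  | or : PBExp PVar Val → PBExp PVar Val → PBExp PVar Val
  | not : PBExp PVar Val → PBExp PVar Val

/-- Semantic interpretation ⟦p⟧ of a syntactic Boolean state expression. -/
def PBExp.eval {PVar Val : Type} (σ : PVar → Val) : PBExp PVar Val → Prop
  | .comp r e1 e2 => r (PExp.eval σ e1) (PExp.eval σ e2)
  | .and b1 b2 => PBExp.eval σ b1 ∧ PBExp.eval σ b2
  | .or b1 b2 => PBExp.eval σ b1 ∨ PBExp.eval σ b2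
  | .not b => ¬ PBExp.eval σ b

/-- if(b){C} := ((assume b) ; C) + (assume ¬b). -/
def ifCmd {PVar PVal : Type} (b : (PVar → PVal) → Prop) (C : Cmd PVar PVal) :
    Cmd PVar PVal :=
  Cmd.choice (Cmd.seq (Cmd.assume b) C) (Cmd.assume (fun σ => ¬ b σ))

/-- while(b){C} := ((assume b) ; C)* ; assume ¬b. -/
def whileCmd {PVar PVal : Type} (b : (PVar → PVal) → Prop) (C : Cmd PVar PVal) :
    Cmd PVar PVal :=
  Cmd.seq (Cmd.iter (Cmd.seq (Cmd.assume b) C)) (Cmd.assume (fun σ => ¬ b σ))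

/-- No universal state quantifier ∀⟨_⟩ occurs anywhere in the assertion. -/
def HAssrt.noForallS {PVar LVar Val : Type} : HAssrt PVar LVar Val → Prop
  | .bconst _ => True
  | .comp _ _ _ => True
  | .conj A B => HAssrt.noForallS A ∧ HAssrt.noForallS B
  | .disj A B => HAssrt.noForallS A ∧ HAssrt.noForallS B
  | .forallV body => ∀ v, HAssrt.noForallS (body v)
  | .existsV body => ∀ v, HAssrt.noForallS (body v)
  | .forallS _ _ => False
  | .existsS _ A => HAssrt.noForallS A

/-- No universal state quantifier ∀⟨_⟩ occurs within the scope of any existential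
quantifier (over states or over values). -/
def HAssrt.noForallSAfterExists {PVar LVar Val : Type} : HAssrt PVar LVar Val → Prop
  | .bconst _ => True
  | .comp _ _ _ => True
  | .conj A B => HAssrt.noForallSAfterExists A ∧ HAssrt.noForallSAfterExists B
  | .disj A B => HAssrt.noForallSAfterExists A ∧ HAssrt.noForallSAfterExists B
  | .forallV body => ∀ v, HAssrt.noForallSAfterExists (body v)
  | .existsV body => ∀ v, HAssrt.noForallS (body v)
  | .forallS _ A => HAssrt.noForallSAfterExists A
  | .existsS _ A => HAssrt.noForallS A

/-!
`while(b){C}` from `S` yields the union of the sets `Tₙ` obtained by running `if(b){C}` exactly `n`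
times and then `assume ¬b`. States that leave the loop are kept by all further iterations, so `Tₙ`
increases with `n`; the invariant and the exit triple give `Q` on every `Tₙ`. An assertion without
`∀⟨_⟩` below an existential passes to the union of such a chain: universally quantified states
already live in some `Tₙ`, and existential subformulas are monotone in the set of states.
-/

section Semantics

variable {PVar PVal LVar LVal : Type} [DecidableEq PVar]

theorem bigStep_assume_iff {b : (PVar → PVal) → Prop} {σ σ' : PVar → PVal} :
    BigStep (Cmd.assume b) σ σ' ↔ σ = σ' ∧ b σ' :=
  ⟨fun | .assume h => ⟨rfl, h⟩, fun | ⟨rfl, h⟩ => .assume h⟩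

theorem bigStep_seq_iff {C₁ C₂ : Cmd PVar PVal} {σ σ'' : PVar → PVal} :
    BigStep (Cmd.seq C₁ C₂) σ σ'' ↔ ∃ σ', BigStep C₁ σ σ' ∧ BigStep C₂ σ' σ'' :=
  ⟨fun | .seq h₁ h₂ => ⟨_, h₁, h₂⟩, fun ⟨_, h₁, h₂⟩ => .seq h₁ h₂⟩

theorem bigStep_choice_iff {C₁ C₂ : Cmd PVar PVal} {σ σ' : PVar → PVal} :
    BigStep (Cmd.choice C₁ C₂) σ σ' ↔ BigStep C₁ σ σ' ∨ BigStep C₂ σ σ' :=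
  ⟨fun | .choiceL h => .inl h | .choiceR h => .inr h, Or.rec .choiceL .choiceR⟩

theorem bigStep_iter_iff_reflTransGen {C : Cmd PVar PVal} {σ σ' : PVar → PVal} :
    BigStep (Cmd.iter C) σ σ' ↔ Relation.ReflTransGen (BigStep C) σ σ' := by
  constructor
  · intro h
    generalize hD : Cmd.iter C = D at h
    induction h with
    | iterNil => exact .refl
    | iterCons hstep _ _ ih =>
      cases hD
      exact .head hstep (ih rfl)
    | _ => cases hD
  · intro h
    induction h using Relation.ReflTransGen.head_induction_on with
    | refl => exact .iterNil
    | head hstep _ ih => exact .iterCons hstep ih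

theorem sem_mono (C : Cmd PVar PVal) :
    Monotone (sem C : Set (EState PVar PVal LVar LVal) → Set (EState PVar PVal LVar LVal)) :=
  fun _ _ hST _ ⟨σ, hσ, hstep⟩ => ⟨σ, hST hσ, hstep⟩

theorem sem_iUnion {ι : Sort*} (C : Cmd PVar PVal) (T : ι → Set (EState PVar PVal LVar LVal)) :
    sem C (⋃ i, T i) = ⋃ i, sem C (T i) := by
  ext φ
  simp only [sem, Set.mem_iUnion, Set.mem_ofPred_eq]
  grind

theorem sem_assume (b : (PVar → PVal) → Prop) (S : Set (EState PVar PVal LVar LVal)) :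
    sem (Cmd.assume b) S = {φ ∈ S | b φ.2} := by
  ext φ
  simp [sem, bigStep_assume_iff]

theorem sem_seq (C₁ C₂ : Cmd PVar PVal) (S : Set (EState PVar PVal LVar LVal)) :
    sem (Cmd.seq C₁ C₂) S = sem C₂ (sem C₁ S) := by
  ext φ
  simp only [sem, bigStep_seq_iff, Set.mem_ofPred_eq]
  grind

theorem sem_choice (C₁ C₂ : Cmd PVar PVal) (S : Set (EState PVar PVal LVar LVal)) :
    sem (Cmd.choice C₁ C₂) S = sem C₁ S ∪ sem C₂ S := by
  ext φ
  simp only [sem, bigStep_choice_iff, Set.mem_ofPred_eq, Set.mem_union]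
  grind

theorem subset_sem_iter (C : Cmd PVar PVal) (S : Set (EState PVar PVal LVar LVal)) :
    S ⊆ sem (Cmd.iter C) S :=
  fun φ hφ => ⟨φ.2, hφ, .iterNil⟩

theorem sem_sem_iter_subset (C : Cmd PVar PVal) (S : Set (EState PVar PVal LVar LVal)) :
    sem C (sem (Cmd.iter C) S) ⊆ sem (Cmd.iter C) S := by
  rintro φ ⟨σ', ⟨σ, hσ, hiter⟩, hstep⟩
  exact ⟨σ, hσ, bigStep_iter_iff_reflTransGen.2
    ((bigStep_iter_iff_reflTransGen.1 hiter).tail hstep)⟩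

theorem sem_iter_subset {C : Cmd PVar PVal} {S T : Set (EState PVar PVal LVar LVal)}
    (hST : S ⊆ T) (hT : sem C T ⊆ T) : sem (Cmd.iter C) S ⊆ T := by
  rintro ⟨l, σ'⟩ ⟨σ, hσ, hiter⟩
  replace hiter : Relation.ReflTransGen (BigStep C) σ σ' := bigStep_iter_iff_reflTransGen.1 hiter
  induction hiter with
  | refl => exact hST hσ
  | tail _ hstep ih => exact hT ⟨_, ih hσ, hstep⟩

theorem sem_ifCmd (b : (PVar → PVal) → Prop) (C : Cmd PVar PVal)
    (S : Set (EState PVar PVal LVar LVal)) :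
    sem (ifCmd b C) S = sem (Cmd.seq (Cmd.assume b) C) S ∪ {φ ∈ S | ¬ b φ.2} := by
  rw [ifCmd, sem_choice, sem_assume]

theorem sem_iter_eq_iUnion_iterate_ifCmd (b : (PVar → PVal) → Prop) (C : Cmd PVar PVal)
    (S : Set (EState PVar PVal LVar LVal)) :
    sem (Cmd.iter (Cmd.seq (Cmd.assume b) C)) S = ⋃ n, (sem (ifCmd b C))^[n] S := by
  apply Set.Subset.antisymm
  · apply sem_iter_subset (Set.subset_iUnion (fun n => (sem (ifCmd b C))^[n] S) 0)
    rw [sem_iUnion]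
    refine Set.iUnion_subset fun n => Set.subset_iUnion_of_subset (n + 1) ?_
    rw [Function.iterate_succ_apply', sem_ifCmd]
    exact Set.subset_union_left
  · refine Set.iUnion_subset fun n => ?_
    induction n with
    | zero => exact subset_sem_iter _ S
    | succ n ih =>
      rw [Function.iterate_succ_apply']
      refine (sem_mono _ ih).trans ?_
      rw [sem_ifCmd]
      exact Set.union_subset (sem_sem_iter_subset _ S) (Set.sep_subset _ _)

theorem sem_whileCmd (b : (PVar → PVal) → Prop) (C : Cmd PVar PVal)
    (S : Set (EState PVar PVal LVar LVal)) :
    sem (whileCmd b C) S =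
      ⋃ n, sem (Cmd.assume fun σ => ¬ b σ) ((sem (ifCmd b C))^[n] S) := by
  rw [whileCmd, sem_seq, sem_iter_eq_iUnion_iterate_ifCmd, sem_iUnion]

theorem monotone_sem_assume_not_iterate_ifCmd (b : (PVar → PVal) → Prop) (C : Cmd PVar PVal)
    (S : Set (EState PVar PVal LVar LVal)) :
    Monotone fun n => sem (Cmd.assume fun σ => ¬ b σ) ((sem (ifCmd b C))^[n] S) := by
  refine monotone_nat_of_le_succ fun n => ?_
  rw [Function.iterate_succ_apply', sem_ifCmd, sem_assume, sem_assume]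
  exact fun φ hφ => ⟨.inr hφ, hφ.2⟩

end Semantics

section WhileRule

variable {PVar PVal LVar LVal : Type}

/-- A hyper-assertion is ω-chain closed if it passes to the union of every increasing sequence of
sets of states that satisfy it. It is the semantic condition on the postcondition that suffices
for the while rule. -/
def HAssn.OmegaChainClosed (Q : HAssn PVar PVal LVar LVal) : Prop :=
  ∀ T : ℕ → Set (EState PVar PVal LVar LVal), Monotone T → (∀ n, Q (T n)) → Q (⋃ n, T n)

variable [DecidableEq PVar] {I Q : HAssn PVar PVal LVar LVal} {C : Cmd PVar PVal}

theorem HyperTriple.iterate_sem (hinv : HyperTriple I C I)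
    {S : Set (EState PVar PVal LVar LVal)} (hS : I S) (n : ℕ) : I ((sem C)^[n] S) :=
  Function.Iterate.rec I hS hinv n

theorem HyperTriple.whileCmd_of_omegaChainClosed {b : (PVar → PVal) → Prop}
    (hQ : HAssn.OmegaChainClosed Q) (hinv : HyperTriple I (ifCmd b C) I)
    (hexit : HyperTriple I (Cmd.assume fun σ => ¬ b σ) Q) :
    HyperTriple I (whileCmd b C) Q := by
  intro S hS
  rw [sem_whileCmd]
  exact hQ _ (monotone_sem_assume_not_iterate_ifCmd b C S)
    fun n => hexit _ (hinv.iterate_sem hS n)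

end WhileRule

section Satisfaction

variable {PVar LVar Val : Type}

theorem HAssrt.noForallS.sat_mono {A : HAssrt PVar LVar Val} (hA : A.noForallS)
    {S T : Set (EState PVar Val LVar Val)} (hST : S ⊆ T) {env : ℕ → EState PVar Val LVar Val}
    (hS : HAssrt.sat S env A) : HAssrt.sat T env A := by
  induction A generalizing env with
  | bconst _ => exact hS
  | comp _ _ _ => exact hS
  | conj _ _ ihA ihB => exact hS.imp (ihA hA.1) (ihB hA.2)
  | disj _ _ ihA ihB => exact hS.imp (ihA hA.1) (ihB hA.2)
  | forallV _ ih => exact fun v => ih v (hA v) (hS v)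
  | existsV _ ih => exact hS.imp fun v => ih v (hA v)
  | forallS _ _ _ => exact hA.elim
  | existsS _ _ ih => exact hS.imp fun _ => And.imp (@hST _) (ih hA)

theorem HAssrt.noForallS.sat_iUnion_of_exists {ι : Sort*} {A : HAssrt PVar LVar Val}
    (hA : A.noForallS) {T : ι → Set (EState PVar Val LVar Val)}
    {env : ℕ → EState PVar Val LVar Val} (h : ∃ i, HAssrt.sat (T i) env A) :
    HAssrt.sat (⋃ i, T i) env A :=
  let ⟨i, hi⟩ := h
  hA.sat_mono (Set.subset_iUnion T i) hi

-- Satisfaction is assumed frequently rather than always so that the induction passes disjunctions: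
-- the disjunct that holds may vary with the index, but one of the two holds frequently.
theorem HAssrt.noForallSAfterExists.sat_iUnion_of_frequently {ι : Type*} [Preorder ι]
    {A : HAssrt PVar LVar Val} (hA : A.noForallSAfterExists)
    {T : ι → Set (EState PVar Val LVar Val)} (hT : Monotone T)
    {env : ℕ → EState PVar Val LVar Val}
    (h : ∃ᶠ i in Filter.atTop, HAssrt.sat (T i) env A) :
    HAssrt.sat (⋃ i, T i) env A := by
  induction A generalizing env with
  | bconst _ => exact h.exists.choose_spec
  | comp _ _ _ => exact h.exists.choose_spec
  | conj _ _ ihA ihB =>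
    exact ⟨ihA hA.1 (h.mono fun _ => And.left), ihB hA.2 (h.mono fun _ => And.right)⟩
  | disj _ _ ihA ihB => exact (Filter.frequently_or_distrib.1 h).imp (ihA hA.1) (ihB hA.2)
  | forallV _ ih => exact fun v => ih v (hA v) (h.mono fun _ hi => hi v)
  | existsV body _ => exact noForallS.sat_iUnion_of_exists (A := .existsV body) hA h.exists
  | forallS _ _ ih =>
    intro α hα
    obtain ⟨j, hj⟩ := Set.mem_iUnion.1 hα
    have hlate := h.and_eventually (Filter.eventually_ge_atTop j)
    exact ih hA (hlate.mono fun i ⟨hi, hji⟩ => hi α (hT hji hj))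
  | existsS k B _ => exact noForallS.sat_iUnion_of_exists (A := .existsS k B) hA h.exists

theorem HAssrt.noForallSAfterExists.omegaChainClosed {A : HAssrt PVar LVar Val}
    (hA : A.noForallSAfterExists) (env : ℕ → EState PVar Val LVar Val) :
    HAssn.OmegaChainClosed fun S => HAssrt.sat S env A :=
  fun _ hT hsat => hA.sat_iUnion_of_frequently hT (.of_forall hsat)

end Satisfaction

theorem while_forall_exists_sound_general {PVar LVar Val : Type} [DecidableEq PVar]
    {b : (PVar → Val) → Prop} {C : Cmd PVar Val} {I : HAssn PVar Val LVar Val}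
    {Q : HAssrt PVar LVar Val} (hQ : Q.noForallSAfterExists)
    {env : ℕ → EState PVar Val LVar Val} (hinv : HyperTriple I (ifCmd b C) I)
    (hexit : HyperTriple I (Cmd.assume fun σ => ¬ b σ) (fun S => HAssrt.sat S env Q)) :
    HyperTriple I (whileCmd b C) (fun S => HAssrt.sat S env Q) :=
  .whileCmd_of_omegaChainClosed (hQ.omegaChainClosed env) hinv hexit

/-- Soundness of the While-∀*∃* rule. -/
theorem while_forall_exists_sound {PVar LVar Val : Type} [DecidableEq PVar]
    (b : (PVar → Val) → Prop) (p : PBExp PVar Val)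
    (hb : ∀ σ : PVar → Val, b σ ↔ PBExp.eval σ p)
    (C : Cmd PVar Val)
    (I : HAssn PVar Val LVar Val)
    (Q : HAssrt PVar LVar Val) (hclosed : Q.Closed)
    (hQ : Q.noForallSAfterExists)
    (env : ℕ → EState PVar Val LVar Val)
    (hinv : HyperTriple I (ifCmd b C) I)
    (hexit : HyperTriple I (Cmd.assume (fun σ => ¬ b σ))
      (fun S => HAssrt.sat S env Q)) :
    HyperTriple I (whileCmd b C) (fun S => HAssrt.sat S env Q) :=
  while_forall_exists_sound_general hQ hinv hexit
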